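/- If ν is a σ-ergodic Borel probability measure on Σ, then ν is either Q-regular or Q-singular. -/

import Mathlib

open MeasureTheory ProbabilityTheory Filter Set
open scoped ENNReal

noncomputable section

/-- The one-sided symbolic space over the alphabet `{0, …, b-1}`. -/
abbrev SymbSpace (b : ℕ) : Type := ℕ → Fin b

/-- The cylinder `[w]` of sequences starting with the finite word `w`. -/
def cylinder {b : ℕ} (w : List (Fin b)) : Set (SymbSpace b) :=
  {x | ∀ i : Fin w.length, x i = w.get i}

/-- The prefix `x|_n` of `x` of length `n`, as a finite word. -/
def wordPrefix {b : ℕ} (x : SymbSpace b) (n : ℕ) : List (Fin b) :=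
  List.ofFn (fun i : Fin n => x i)

/-- `Y_w = X_{w_1} X_{w_1w_2} ⋯ X_{w_1⋯w_n}`. -/
def cascadeY {b : ℕ} {Ω : Type*} (X : List (Fin b) → Ω → ℝ) (w : List (Fin b)) (ω : Ω) : ℝ :=
  ∏ k ∈ Finset.range w.length, X (w.take (k + 1)) ω

/-- The total mass `Z_n = ∑_{|u| = n} Y_u ν([u])`. -/
def cascadeZ {b : ℕ} {Ω : Type*} (X : List (Fin b) → Ω → ℝ) (ν : Measure (SymbSpace b))
    (n : ℕ) (ω : Ω) : ℝ :=
  ∑ u : Fin n → Fin b, cascadeY X (List.ofFn u) ω * (ν (cylinder (List.ofFn u))).toReal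

/-- `Z = limsup_n Z_n`. -/
def cascadeZlim {b : ℕ} {Ω : Type*} (X : List (Fin b) → Ω → ℝ) (ν : Measure (SymbSpace b))
    (ω : Ω) : ℝ :=
  Filter.limsup (fun n => cascadeZ X ν n ω) atTop

/-- Assumption (M1): the weights `X_u`, `u` a nonempty finite word, are i.i.d. with common
law that of the nonnegative random variable `X₀` of expectation 1. -/
structure CascadeM1 {b : ℕ} {Ω : Type*} [MeasurableSpace Ω] (P : Measure Ω)
    (X : List (Fin b) → Ω → ℝ) (X₀ : Ω → ℝ) : Prop where
  meas : ∀ w, Measurable (X w)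
  nonneg : ∀ w ω, 0 ≤ X w ω
  meas₀ : Measurable X₀
  nonneg₀ : ∀ ω, 0 ≤ X₀ ω
  mean₀ : ∫ ω, X₀ ω ∂P = 1
  indep : iIndepFun (m := fun _ => inferInstance)
    (fun w : {w : List (Fin b) // w ≠ []} => X w.1) P
  ident : ∀ w : List (Fin b), w ≠ [] → IdentDistrib (X w) X₀ P P

/-- `h_X = E(X log X) ∈ [0, ∞]` (well defined since `x log x ≥ -e⁻¹` and, by convexity,
`E(X log X) ≥ E(X) log E(X) = 0`), encoded as an extended nonnegative real. -/
def entropyX {Ω : Type*} [MeasurableSpace Ω] (P : Measure Ω) (X₀ : Ω → ℝ) : ℝ≥0∞ :=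
  (∫⁻ ω, ENNReal.ofReal (X₀ ω * Real.log (X₀ ω)) ∂P) -
    (∫⁻ ω, ENNReal.ofReal (-(X₀ ω * Real.log (X₀ ω))) ∂P)

/-- The lower local dimension `liminf_n (-log ν([x|_n]) / n)` of `ν` at `x`, valued
in `[0, ∞]`. -/
def lowerLocalDim {b : ℕ} (ν : Measure (SymbSpace b)) (x : SymbSpace b) : ℝ≥0∞ :=
  Filter.liminf
    (fun n : ℕ => ENNReal.ofReal (-Real.log ((ν (cylinder (wordPrefix x n))).toReal) / n))
    atTop

/-- The upper local dimension `limsup_n (-log ν([x|_n]) / n)` of `ν` at `x`. -/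
def upperLocalDim {b : ℕ} (ν : Measure (SymbSpace b)) (x : SymbSpace b) : ℝ≥0∞ :=
  Filter.limsup
    (fun n : ℕ => ENNReal.ofReal (-Real.log ((ν (cylinder (wordPrefix x n))).toReal) / n))
    atTop

/-- The lower Hausdorff dimension of `ν`: the `ν`-essential infimum of the lower local
dimension. -/
def lowerHausdorffDim {b : ℕ} (ν : Measure (SymbSpace b)) : ℝ≥0∞ :=
  essInf (lowerLocalDim ν) ν

/-- The upper Hausdorff dimension of `ν`: the `ν`-essential supremum of the lower local
dimension. -/
def upperHausdorffDim {b : ℕ} (ν : Measure (SymbSpace b)) : ℝ≥0∞ :=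
  essSup (lowerLocalDim ν) ν

/-- The upper packing dimension of `ν`: the `ν`-essential supremum of the upper local
dimension. -/
def upperPackingDim {b : ℕ} (ν : Measure (SymbSpace b)) : ℝ≥0∞ :=
  essSup (upperLocalDim ν) ν


/-- The left shift on the one-sided symbolic space. -/
def shiftMap (b : ℕ) : SymbSpace b → SymbSpace b := fun x n => x (n + 1)

/-!
Write `Z` for the lower limit of the total masses `Z_n`. Below a word `u` the cascade is `Y_u`
times an independent copy of the whole cascade, acting on the image of `ν|_[u]` under `σ^|u|`. Let
`T = E(Q · ν)`. Fatou's lemma gives `T ≤ ν`. By superadditivity of lower limits and this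
self-similarity, `T ∘ σ⁻¹ ≤ T`; both have the same total mass, so `T` is `σ`-invariant. As `ν` is
ergodic and `T ≪ ν`, it follows that `T = c ν` for some constant `c`.

Summing the self-similarity over the words of length `n` then yields `E(Z | ℱ_n) = c Z_n`, where
`ℱ_n` is generated by the first `n` generations. The left side tends almost surely to `Z` by
Lévy's theorem and the right side to `c Z`. So either `c = 1`, and the `Z_n` are conditional
expectations of `Z`, hence uniformly integrable, or `Z = 0` almost surely.
-/

lemma le_of_isSetAlgebra_of_forall_le {α : Type*} {mα : MeasurableSpace α} {𝒜 : Set (Set α)}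
    (h𝒜 : IsSetAlgebra 𝒜) (hgen : mα = MeasurableSpace.generateFrom 𝒜) {μ ν : Measure α}
    [IsFiniteMeasure ν] (hle : ∀ t ∈ 𝒜, μ t ≤ ν t) : μ ≤ ν := by
  have : IsFiniteMeasure μ := ⟨(hle univ h𝒜.univ_mem).trans_lt (measure_lt_top ν univ)⟩
  refine Measure.le_iff.2 fun s hs => ENNReal.le_of_forall_pos_le_add fun ε hε _ => ?_
  have hdense : (μ + ν).MeasureDense 𝒜 :=
    .of_generateFrom_isSetAlgebra_finite _ h𝒜 hgen
  obtain ⟨t, ht, hst⟩ := hdense.approx s hs (measure_ne_top _ _) ε hε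
  have hμ : μ (s \ t) ≤ μ (symmDiff s t) := measure_mono subset_union_left
  have hν : ν (t \ s) ≤ ν (symmDiff s t) := measure_mono subset_union_right
  calc
    μ s ≤ μ t + μ (s \ t) := tsub_le_iff_left.1 le_measure_sdiff
    _ ≤ ν t + μ (s \ t) := add_le_add (hle t ht) le_rfl
    _ ≤ ν s + ν (t \ s) + μ (s \ t) := add_le_add (tsub_le_iff_left.1 le_measure_sdiff) le_rfl
    _ ≤ ν s + (μ + ν) (symmDiff s t) := by
      rw [Measure.add_apply, add_assoc, add_comm (ν (t \ s))]
      gcongr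
    _ ≤ ν s + ε := by
      gcongr
      simpa using hst.le

lemma uniformIntegrable_or_ae_eq_zero_of_condExp_ae_eq_const_mul {Ω : Type*}
    {m₀ : MeasurableSpace Ω} {P : Measure Ω} [IsFiniteMeasure P] {ℱ : Filtration ℕ m₀}
    {f : ℕ → Ω → ℝ} {g : Ω → ℝ} {c : ℝ} (hg : Integrable g P)
    (hgm : StronglyMeasurable[⨆ n, ℱ n] g)
    (hlim : ∀ᵐ ω ∂P, Tendsto (fun n => f n ω) atTop (nhds (g ω)))
    (hcond : ∀ n, P[g | ℱ n] =ᵐ[P] fun ω => c * f n ω) :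
    UniformIntegrable f 1 P ∨ g =ᵐ[P] 0 := by
  by_cases hc : c = 1
  · left
    exact hg.uniformIntegrable_condExp_filtration.ae_eq fun n => by simpa [hc] using hcond n
  · right
    filter_upwards [hg.tendsto_ae_condExp hgm, hlim, ae_all_iff.2 hcond] with ω hLevy hω hcondω
    have hfix : g ω = c * g ω :=
      tendsto_nhds_unique hLevy (by simpa only [hcondω] using hω.const_mul c)
    have hzero : (c - 1) * g ω = 0 := by linarith
    exact (mul_eq_zero.1 hzero).resolve_left (sub_ne_zero.2 hc)

section SymbolicSpace

variable {b : ℕ}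

lemma measurable_comp_wordPrefix {β : Type*} [MeasurableSpace β] (f : List (Fin b) → β) (n : ℕ) :
    Measurable fun x : SymbSpace b => f (wordPrefix x n) :=
  (measurable_of_finite fun u : Fin n → Fin b => f (List.ofFn u)).comp
    (measurable_pi_lambda _ fun i => measurable_pi_apply (i : ℕ))

lemma mem_cylinder_iff_wordPrefix_eq {w : List (Fin b)} {x : SymbSpace b} :
    x ∈ cylinder w ↔ wordPrefix x w.length = w := by
  simp [_root_.cylinder, wordPrefix, List.ext_get_iff, Fin.forall_iff]

@[simp]
lemma cylinder_nil : cylinder ([] : List (Fin b)) = univ := by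
  ext x
  simp [_root_.cylinder]

lemma mem_cylinder_cons {i : Fin b} {v : List (Fin b)} {x : SymbSpace b} :
    x ∈ cylinder (i :: v) ↔ x 0 = i ∧ shiftMap b x ∈ cylinder v := by
  simp [_root_.cylinder, shiftMap, Fin.forall_iff_succ]

lemma measurableSet_cylinder (w : List (Fin b)) : MeasurableSet (cylinder w) := by
  have hw : cylinder w = {x | wordPrefix x w.length = w} :=
    Set.ext fun _ => mem_cylinder_iff_wordPrefix_eq
  exact hw ▸ measurableSet_setOfPred.2 (measurable_comp_wordPrefix (· = w) w.length)

lemma lintegral_comp_wordPrefix (f : List (Fin b) → ℝ≥0∞) (n : ℕ) (μ : Measure (SymbSpace b)) :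
    ∫⁻ x, f (wordPrefix x n) ∂μ =
      ∑ u : Fin n → Fin b, f (List.ofFn u) * μ (cylinder (List.ofFn u)) := by
  let p : SymbSpace b → Fin n → Fin b := fun x i => x i
  have hp : Measurable p := by fun_prop
  have hfib (u : Fin n → Fin b) : p ⁻¹' {u} = cylinder (List.ofFn u) := by
    ext x
    simp [mem_cylinder_iff_wordPrefix_eq, wordPrefix, p]
  calc
    ∫⁻ x, f (wordPrefix x n) ∂μ = ∫⁻ u, f (List.ofFn u) ∂μ.map p :=
      (lintegral_map (measurable_of_finite fun u : Fin n → Fin b => f (List.ofFn u)) hp).symm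
    _ = ∑ u : Fin n → Fin b, f (List.ofFn u) * μ (cylinder (List.ofFn u)) := by
      rw [lintegral_fintype]
      exact Finset.sum_congr rfl fun u _ => by
        rw [Measure.map_apply hp (measurableSet_singleton u), hfib]

lemma sum_measure_cylinder (n : ℕ) (μ : Measure (SymbSpace b)) :
    ∑ u : Fin n → Fin b, μ (cylinder (List.ofFn u)) = μ univ := by
  simpa using (lintegral_comp_wordPrefix (fun _ => 1) n μ).symm

lemma exists_forall_measure_eq_sum_cylinder {t : Set (SymbSpace b)}
    (ht : t ∈ measurableCylinders fun _ : ℕ => Fin b) :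
    ∃ (n : ℕ) (c : (Fin n → Fin b) → ℝ≥0∞), ∀ μ : Measure (SymbSpace b),
      μ t = ∑ u, c u * μ (cylinder (List.ofFn u)) := by
  classical
  have htm : MeasurableSet t := .of_mem_measurableCylinders ht
  rw [measurableCylinders_nat] at ht
  simp only [mem_iUnion, mem_singleton_iff, exists_prop] at ht
  obtain ⟨N, S, -, ht⟩ := ht
  let A : Set (List (Fin b)) := (wordPrefix · (N + 1)) '' t
  have hmem (x : SymbSpace b) : wordPrefix x (N + 1) ∈ A ↔ x ∈ t := by
    refine ⟨?_, fun hx => mem_image_of_mem _ hx⟩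
    rintro ⟨y, hy, hyx⟩
    have hrestrict : (Finset.Iic N).restrict y = (Finset.Iic N).restrict x := funext fun k =>
      congrFun (List.ofFn_injective hyx) ⟨k, Nat.lt_succ_of_le (Finset.mem_Iic.1 k.2)⟩
    rw [ht, mem_cylinder] at hy ⊢
    exact hrestrict ▸ hy
  refine ⟨N + 1, fun u => A.indicator 1 (List.ofFn u), fun μ => ?_⟩
  rw [← lintegral_comp_wordPrefix, ← lintegral_indicator_one htm]
  refine lintegral_congr fun x => ?_
  simp [indicator_apply, hmem]

lemma le_of_forall_cylinder_le {μ ν : Measure (SymbSpace b)} [IsFiniteMeasure ν]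
    (h : ∀ w, μ (cylinder w) ≤ ν (cylinder w)) : μ ≤ ν := by
  refine le_of_isSetAlgebra_of_forall_le isSetAlgebra_measurableCylinders
    generateFrom_measurableCylinders.symm fun t ht => ?_
  obtain ⟨n, c, hc⟩ := exists_forall_measure_eq_sum_cylinder ht
  rw [hc μ, hc ν]
  exact Finset.sum_le_sum fun u _ => mul_le_mul' le_rfl (h _)

lemma aemeasurable_measure_of_forall_cylinder {Ω : Type*} [MeasurableSpace Ω] {P : Measure Ω}
    {Q : Ω → Measure (SymbSpace b)} (hfin : ∀ᵐ ω ∂P, Q ω univ < ∞)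
    (hQ : ∀ w, AEMeasurable (fun ω => Q ω (cylinder w)) P) : AEMeasurable Q P := by
  classical
  have hgood : ∀ᵐ ω ∂P, Q ω univ < ∞ ∧ ∀ w, Q ω (cylinder w) = (hQ w).mk _ ω :=
    hfin.and (ae_all_iff.2 fun w => (hQ w).ae_eq_mk)
  obtain ⟨N, hbad, hNm, hN⟩ := exists_measurable_superset_of_null (ae_iff.1 hgood)
  have hNc {ω : Ω} (hω : ω ∉ N) : Q ω univ < ∞ ∧ ∀ w, Q ω (cylinder w) = (hQ w).mk _ ω :=
    by_contra fun h => hω (hbad h)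
  let Q' : Ω → Measure (SymbSpace b) := fun ω => if ω ∈ N then 0 else Q ω
  have : ∀ ω, IsFiniteMeasure (Q' ω) := fun ω => by
    by_cases hω : ω ∈ N
    · simp only [Q', if_pos hω]
      infer_instance
    · simpa only [Q', if_neg hω] using ⟨(hNc hω).1⟩
  have hcyl (w : List (Fin b)) : Measurable fun ω => Q' ω (cylinder w) := by
    have heq : (fun ω => Q' ω (cylinder w)) = fun ω => if ω ∈ N then 0 else (hQ w).mk _ ω := by
      ext ω
      by_cases hω : ω ∈ N <;> simp [Q', hω, (hNc _).2]
    exact heq ▸ measurable_const.ite hNm (hQ w).measurable_mk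
  have hQ' : Measurable Q' := by
    refine Measurable.measure_of_isPiSystem generateFrom_measurableCylinders.symm
      isPiSystem_measurableCylinders (fun t ht => ?_) (by simpa using hcyl [])
    obtain ⟨n, c, hc⟩ := exists_forall_measure_eq_sum_cylinder ht
    simp only [hc]
    exact Finset.measurable_sum _ fun u _ => (hcyl _).const_mul _
  refine ⟨Q', hQ', ?_⟩
  filter_upwards [measure_eq_zero_iff_ae_notMem.1 hN] with ω hω
  exact (if_neg hω).symm

lemma measurable_shiftMap : Measurable (shiftMap b) := by
  unfold shiftMap
  fun_prop

lemma iterate_shiftMap_apply (k : ℕ) (x : SymbSpace b) (n : ℕ) :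
    (shiftMap b)^[k] x n = x (k + n) := by
  induction k generalizing x with
  | zero => simp
  | succ k ih =>
    rw [Function.iterate_succ_apply, ih]
    simp only [shiftMap]
    congr 1
    omega

lemma wordPrefix_add (x : SymbSpace b) (k n : ℕ) :
    wordPrefix x (k + n) = wordPrefix x k ++ wordPrefix ((shiftMap b)^[k] x) n := by
  simp only [wordPrefix, List.ofFn_add, iterate_shiftMap_apply]
  rfl

lemma sum_restrict_cylinder_cons (μ : Measure (SymbSpace b)) (v : List (Fin b)) :
    ∑ i, μ.restrict (cylinder (i :: v)) = μ.restrict (shiftMap b ⁻¹' cylinder v) := by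
  have hunion : shiftMap b ⁻¹' cylinder v = ⋃ i, cylinder (i :: v) := by
    ext x
    simp [mem_cylinder_cons]
  have hdisj : Pairwise fun i j : Fin b => Disjoint (cylinder (i :: v)) (cylinder (j :: v)) :=
    fun i j hij => disjoint_left.2 fun x hi hj =>
      hij ((mem_cylinder_cons.1 hi).1.symm.trans (mem_cylinder_cons.1 hj).1)
  rw [hunion, Measure.restrict_iUnion hdisj fun i => measurableSet_cylinder _,
    Measure.sum_fintype]

end SymbolicSpace

section Cascade

variable {b : ℕ} {Ω : Type*} {X : List (Fin b) → Ω → ℝ} {ω : Ω}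

/-- The total mass of the cascade measure `Q_n · μ` at generation `n`: the quantity `Z_n` for an
arbitrary measure `μ`, with values in `[0, ∞]`. -/
def cascadeMass (X : List (Fin b) → Ω → ℝ) (n : ℕ) (μ : Measure (SymbSpace b)) (ω : Ω) : ℝ≥0∞ :=
  ∫⁻ x, ENNReal.ofReal (cascadeY X (wordPrefix x n) ω) ∂μ

/-- The total mass of the limit measure `Q · μ`. It is a lower limit rather than a limit so that
it is everywhere defined, and superadditive in `μ`. -/
def cascadeLimMass (X : List (Fin b) → Ω → ℝ) (μ : Measure (SymbSpace b)) (ω : Ω) : ℝ≥0∞ :=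
  liminf (fun n => cascadeMass X n μ ω) atTop

lemma take_succ_ne_nil {w : List (Fin b)} {k : ℕ} (hk : k < w.length) : w.take (k + 1) ≠ [] := by
  intro hnil
  simp_all [List.take_eq_nil_iff]

lemma cascadeY_nonneg (hX : ∀ u, 0 ≤ X u ω) (w : List (Fin b)) : 0 ≤ cascadeY X w ω :=
  Finset.prod_nonneg fun _ _ => hX _

lemma cascadeY_append (w u : List (Fin b)) :
    cascadeY X (w ++ u) ω = cascadeY X w ω * cascadeY (fun v => X (w ++ v)) u ω := by
  simp only [cascadeY, List.length_append, Finset.prod_range_add]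
  congr 1
  · refine Finset.prod_congr rfl fun k hk => ?_
    rw [List.take_append_of_le_length (Finset.mem_range.1 hk)]
  · refine Finset.prod_congr rfl fun k _ => ?_
    rw [add_assoc, List.take_length_add_append]

lemma cascadeLimMass_congr {Ω' : Type*} {X' : List (Fin b) → Ω' → ℝ} {ω' : Ω'}
    (h : ∀ u, u ≠ [] → X u ω = X' u ω') (μ : Measure (SymbSpace b)) :
    cascadeLimMass X μ ω = cascadeLimMass X' μ ω' := by
  have hY (w : List (Fin b)) : cascadeY X w ω = cascadeY X' w ω' :=
    Finset.prod_congr rfl fun k hk => h _ (take_succ_ne_nil (Finset.mem_range.1 hk))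
  simp only [cascadeLimMass, cascadeMass, hY]

lemma cascadeMass_eq_sum (n : ℕ) (μ : Measure (SymbSpace b)) :
    cascadeMass X n μ ω = ∑ u : Fin n → Fin b,
      ENNReal.ofReal (cascadeY X (List.ofFn u) ω) * μ (cylinder (List.ofFn u)) :=
  lintegral_comp_wordPrefix (fun w => ENNReal.ofReal (cascadeY X w ω)) n μ

lemma toReal_cascadeMass (hX : ∀ u, 0 ≤ X u ω) (n : ℕ) (μ : Measure (SymbSpace b))
    [IsFiniteMeasure μ] : (cascadeMass X n μ ω).toReal = cascadeZ X μ n ω := by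
  rw [cascadeMass_eq_sum, ENNReal.toReal_sum fun u _ => ENNReal.mul_ne_top ENNReal.ofReal_ne_top
    (measure_ne_top _ _)]
  simp [cascadeZ, ENNReal.toReal_ofReal (cascadeY_nonneg hX _)]

lemma cascadeMass_length_add {w : List (Fin b)} {μ : Measure (SymbSpace b)}
    (hμ : ∀ᵐ x ∂μ, x ∈ cylinder w) (hX : ∀ u, 0 ≤ X u ω) (n : ℕ) :
    cascadeMass X (w.length + n) μ ω = ENNReal.ofReal (cascadeY X w ω) *
      cascadeMass (fun u => X (w ++ u)) n (μ.map (shiftMap b)^[w.length]) ω := by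
  have hm : Measurable fun x : SymbSpace b =>
      ENNReal.ofReal (cascadeY (fun u => X (w ++ u)) (wordPrefix x n) ω) :=
    measurable_comp_wordPrefix (fun v => ENNReal.ofReal (cascadeY (fun u => X (w ++ u)) v ω)) n
  have hσ : Measurable (shiftMap b)^[w.length] := measurable_shiftMap.iterate _
  rw [cascadeMass, cascadeMass, lintegral_map hm hσ,
    ← lintegral_const_mul _ (by exact hm.comp hσ)]
  refine lintegral_congr_ae ?_
  filter_upwards [hμ] with x hx
  rw [wordPrefix_add, mem_cylinder_iff_wordPrefix_eq.1 hx, cascadeY_append,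
    ENNReal.ofReal_mul (cascadeY_nonneg hX w)]

lemma cascadeLimMass_eq_mul_map_shiftMap {w : List (Fin b)} {μ : Measure (SymbSpace b)}
    (hμ : ∀ᵐ x ∂μ, x ∈ cylinder w) (hX : ∀ u, 0 ≤ X u ω) :
    cascadeLimMass X μ ω = ENNReal.ofReal (cascadeY X w ω) *
      cascadeLimMass (fun u => X (w ++ u)) (μ.map (shiftMap b)^[w.length]) ω := by
  rw [cascadeLimMass, cascadeLimMass, ← ENNReal.liminf_const_mul_of_ne_top ENNReal.ofReal_ne_top,
    ← liminf_nat_add _ w.length]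
  simp only [add_comm _ w.length, cascadeMass_length_add hμ hX]

lemma sum_cascadeLimMass_le {ι : Type*} [Fintype ι] (μ : ι → Measure (SymbSpace b)) :
    ∑ i, cascadeLimMass X (μ i) ω ≤ cascadeLimMass X (∑ i, μ i) ω := by
  let _ : MeasurableSpace ι := ⊤
  have hfatou := lintegral_liminf_le (μ := (Measure.count : Measure ι)) (u := atTop)
    (f := fun n i => cascadeMass X n (μ i) ω) fun n => measurable_from_top
  simpa [lintegral_count, cascadeLimMass, cascadeMass] using hfatou

end Cascade

section Weights

/-- The words that index the weights of a cascade: `X []` is a junk value. -/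
abbrev NonemptyWord (b : ℕ) : Type := {w : List (Fin b) // w ≠ []}

variable {b : ℕ} {Ω : Type*}

/-- The `σ`-algebra generated by the weights `X_w`, `w ∈ S`. -/
abbrev weightsMeasurableSpace (X : List (Fin b) → Ω → ℝ) (S : Set (NonemptyWord b)) :
    MeasurableSpace Ω :=
  ⨆ w ∈ S, MeasurableSpace.comap (X w.1) inferInstance

variable {X : List (Fin b) → Ω → ℝ}

lemma measurable_weight {S : Set (NonemptyWord b)} {w : NonemptyWord b} (hw : w ∈ S) :
    Measurable[weightsMeasurableSpace X S] (X w.1) :=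
  measurable_iff_comap_le.2 <|
    le_iSup₂ (f := fun (v : NonemptyWord b) (_ : v ∈ S) =>
      MeasurableSpace.comap (X v.1) inferInstance) w hw

lemma weightsMeasurableSpace_mono {S T : Set (NonemptyWord b)} (hST : S ⊆ T) :
    weightsMeasurableSpace X S ≤ weightsMeasurableSpace X T :=
  biSup_mono hST

lemma weightsMeasurableSpace_le [mΩ : MeasurableSpace Ω] (hX : ∀ w, Measurable (X w))
    (S : Set (NonemptyWord b)) : weightsMeasurableSpace X S ≤ mΩ :=
  iSup₂_le fun w _ => (hX w.1).comap_le

/-- The natural filtration of the cascade: at time `n`, all weights of generation at most `n`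
are known. -/
def cascadeFiltration [mΩ : MeasurableSpace Ω] (hX : ∀ w, Measurable (X w)) : Filtration ℕ mΩ where
  seq n := weightsMeasurableSpace X {w | w.1.length ≤ n}
  mono' _ _ hmn := weightsMeasurableSpace_mono fun _ hw => le_trans hw hmn
  le' _ := weightsMeasurableSpace_le hX _

lemma measurable_cascadeY [MeasurableSpace Ω] {w : List (Fin b)}
    (hX : ∀ u, u ≠ [] → u.length ≤ w.length → Measurable (X u)) : Measurable (cascadeY X w) := by
  unfold cascadeY
  exact Finset.measurable_prod _ fun k hk =>
    hX _ (take_succ_ne_nil (Finset.mem_range.1 hk)) (by simp)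

lemma measurable_cascadeMass [MeasurableSpace Ω] {n : ℕ}
    (hX : ∀ u, u ≠ [] → u.length ≤ n → Measurable (X u)) (μ : Measure (SymbSpace b)) :
    Measurable (cascadeMass X n μ) := by
  have hsum : cascadeMass X n μ = fun ω => ∑ u : Fin n → Fin b,
      ENNReal.ofReal (cascadeY X (List.ofFn u) ω) * μ (cylinder (List.ofFn u)) :=
    funext fun _ => cascadeMass_eq_sum n μ
  rw [hsum]
  refine Finset.measurable_sum _ fun u _ => .mul_const (.ennreal_ofReal ?_) _
  exact measurable_cascadeY fun v hv hlen => hX v hv (by simpa using hlen)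

lemma measurable_cascadeLimMass [MeasurableSpace Ω] (hX : ∀ u, u ≠ [] → Measurable (X u))
    (μ : Measure (SymbSpace b)) : Measurable (cascadeLimMass X μ) :=
  .liminf fun _ => measurable_cascadeMass (fun u hu _ => hX u hu) μ

lemma measurable_cascadeLimMass_iSup_cascadeFiltration [MeasurableSpace Ω]
    (hX : ∀ w, Measurable (X w)) (μ : Measure (SymbSpace b)) :
    Measurable[⨆ n, cascadeFiltration hX n] (cascadeLimMass X μ) :=
  @measurable_cascadeLimMass _ _ _ (_) (fun u hu =>
    (measurable_weight (w := ⟨u, hu⟩) (le_refl u.length)).mono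
      (le_iSup (fun n => (cascadeFiltration hX n : MeasurableSpace Ω)) u.length) le_rfl) μ

end Weights

section IndependentWeights

variable {b : ℕ} {Ω : Type*} [MeasurableSpace Ω] {P : Measure Ω} {X : List (Fin b) → Ω → ℝ}
  {X₀ : Ω → ℝ}

namespace CascadeM1

lemma indep_weightsMeasurableSpace (hM1 : CascadeM1 P X X₀) {S T : Set (NonemptyWord b)}
    (hST : Disjoint S T) : Indep (weightsMeasurableSpace X S) (weightsMeasurableSpace X T) P :=
  indep_iSup_of_disjoint
    (m := fun w : NonemptyWord b => MeasurableSpace.comap (X w.1) inferInstance)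
    (fun w => (hM1.meas w.1).comap_le) hM1.indep hST

lemma lintegral_weight (hM1 : CascadeM1 P X X₀) {w : List (Fin b)} (hw : w ≠ []) :
    ∫⁻ ω, ENNReal.ofReal (X w ω) ∂P = 1 := by
  have hX₀ : Integrable X₀ P := .of_integral_ne_zero (by simp [hM1.mean₀])
  have hXw : Integrable (X w) P := (hM1.ident w hw).integrable_iff.2 hX₀
  rw [← ofReal_integral_eq_lintegral_ofReal hXw (ae_of_all _ (hM1.nonneg w)),
    (hM1.ident w hw).integral_eq, hM1.mean₀, ENNReal.ofReal_one]

lemma lintegral_cascadeY (hM1 : CascadeM1 P X X₀) (w : List (Fin b)) :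
    ∫⁻ ω, ENNReal.ofReal (cascadeY X w ω) ∂P = 1 := by
  let ancestor (k : Fin w.length) : NonemptyWord b := ⟨w.take (k + 1), take_succ_ne_nil k.2⟩
  have hinj : Function.Injective ancestor := fun j k hjk => by
    have hlen := congrArg (fun v => v.1.length) hjk
    simp only [ancestor, List.length_take] at hlen
    omega
  have hindep : iIndepFun (fun k ω => ENNReal.ofReal (X (ancestor k).1 ω)) P :=
    (hM1.indep.precomp hinj).comp _ fun _ => ENNReal.measurable_ofReal
  calc
    ∫⁻ ω, ENNReal.ofReal (cascadeY X w ω) ∂P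
      = ∫⁻ ω, ∏ k, ENNReal.ofReal (X (ancestor k).1 ω) ∂P := by
        refine lintegral_congr fun ω => ?_
        rw [cascadeY, Finset.prod_range, ENNReal.ofReal_prod_of_nonneg fun _ _ => hM1.nonneg _ _]
    _ = ∏ k, ∫⁻ ω, ENNReal.ofReal (X (ancestor k).1 ω) ∂P :=
        lintegral_prod_eq_prod_lintegral_of_indepFun _ _ hindep
          fun k => (hM1.meas _).ennreal_ofReal
    _ = 1 := Finset.prod_eq_one fun k _ => hM1.lintegral_weight (ancestor k).2

lemma subtree (hM1 : CascadeM1 P X X₀) (w : List (Fin b)) :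
    CascadeM1 P (fun u => X (w ++ u)) X₀ where
  meas _ := hM1.meas _
  nonneg _ := hM1.nonneg _
  meas₀ := hM1.meas₀
  nonneg₀ := hM1.nonneg₀
  mean₀ := hM1.mean₀
  indep := hM1.indep.precomp
    (g := fun v : NonemptyWord b => (⟨w ++ v.1, by simp [v.2]⟩ : NonemptyWord b))
    fun u v huv => by simpa [Subtype.ext_iff] using huv
  ident u hu := hM1.ident _ (by simp [hu])

lemma lintegral_cascadeLimMass_eq {X' : List (Fin b) → Ω → ℝ} (hM1 : CascadeM1 P X X₀)
    (hM1' : CascadeM1 P X' X₀) (μ : Measure (SymbSpace b)) :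
    ∫⁻ ω, cascadeLimMass X μ ω ∂P = ∫⁻ ω, cascadeLimMass X' μ ω ∂P := by
  let coord (u : List (Fin b)) (ξ : NonemptyWord b → ℝ) : ℝ := if h : u ≠ [] then ξ ⟨u, h⟩ else 0
  have hcoord : Measurable (cascadeLimMass coord μ) := measurable_cascadeLimMass (fun u hu => by
    simpa only [coord, dif_pos hu] using measurable_pi_apply _) μ
  have hident : IdentDistrib (fun ω (w : NonemptyWord b) => X w.1 ω)
      (fun ω (w : NonemptyWord b) => X' w.1 ω) P P :=
    .pi (fun w => (hM1.ident w.1 w.2).trans (hM1'.ident w.1 w.2).symm) hM1.indep hM1'.indep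
  have hfactor (Y : List (Fin b) → Ω → ℝ) (ω : Ω) :
      cascadeLimMass Y μ ω = cascadeLimMass coord μ fun w => Y w.1 ω :=
    cascadeLimMass_congr (fun u hu => by simp [coord, hu]) μ
  simpa only [hfactor X, hfactor X', Function.comp_apply] using (hident.comp hcoord).lintegral_eq

lemma lintegral_cascadeMass (hM1 : CascadeM1 P X X₀) (n : ℕ) (μ : Measure (SymbSpace b)) :
    ∫⁻ ω, cascadeMass X n μ ω ∂P = μ univ := by
  have hY (w : List (Fin b)) : Measurable fun ω => ENNReal.ofReal (cascadeY X w ω) :=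
    (measurable_cascadeY fun u _ _ => hM1.meas u).ennreal_ofReal
  simp only [cascadeMass_eq_sum]
  rw [lintegral_finsetSum _ fun u _ => (hY _).mul_const _]
  simp only [lintegral_mul_const _ (hY _), hM1.lintegral_cascadeY, one_mul, sum_measure_cylinder]

lemma lintegral_cascadeLimMass_le (hM1 : CascadeM1 P X X₀) (μ : Measure (SymbSpace b)) :
    ∫⁻ ω, cascadeLimMass X μ ω ∂P ≤ μ univ := by
  calc
    ∫⁻ ω, cascadeLimMass X μ ω ∂P ≤ liminf (fun n => ∫⁻ ω, cascadeMass X n μ ω ∂P) atTop :=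
      lintegral_liminf_le fun n => measurable_cascadeMass (fun u _ _ => hM1.meas u) μ
    _ = μ univ := by simp [hM1.lintegral_cascadeMass]

lemma lintegral_cascadeLimMass_ne_top (hM1 : CascadeM1 P X X₀) (μ : Measure (SymbSpace b))
    [IsFiniteMeasure μ] : ∫⁻ ω, cascadeLimMass X μ ω ∂P ≠ ∞ :=
  ((hM1.lintegral_cascadeLimMass_le μ).trans_lt (measure_lt_top μ univ)).ne

lemma integrable_toReal_cascadeLimMass (hM1 : CascadeM1 P X X₀) (μ : Measure (SymbSpace b))
    [IsFiniteMeasure μ] : Integrable (fun ω => (cascadeLimMass X μ ω).toReal) P :=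
  integrable_toReal_of_lintegral_ne_top
    (measurable_cascadeLimMass (fun u _ => hM1.meas u) μ).aemeasurable
    (hM1.lintegral_cascadeLimMass_ne_top μ)

/-- The weights below `w` are independent of the first `|w|` generations and form a copy of the
whole cascade. -/
lemma setLIntegral_cascadeLimMass_eq_mul (hM1 : CascadeM1 P X X₀) {w : List (Fin b)}
    {μ : Measure (SymbSpace b)} (hμ : ∀ᵐ x ∂μ, x ∈ cylinder w) {A : Set Ω}
    (hA : MeasurableSet[cascadeFiltration hM1.meas w.length] A) :
    ∫⁻ ω in A, cascadeLimMass X μ ω ∂P = (∫⁻ ω in A, ENNReal.ofReal (cascadeY X w ω) ∂P) *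
      ∫⁻ ω, cascadeLimMass X (μ.map (shiftMap b)^[w.length]) ω ∂P := by
  let S : Set (NonemptyWord b) := {u | u.1.length ≤ w.length}
  have hA' : MeasurableSet A := (cascadeFiltration hM1.meas).le _ _ hA
  have hpast : Measurable[weightsMeasurableSpace X S]
      (A.indicator fun ω => ENNReal.ofReal (cascadeY X w ω)) :=
    .indicator (.ennreal_ofReal <| @measurable_cascadeY _ _ _ (_) _ fun u hu hlen =>
      measurable_weight (w := ⟨u, hu⟩) hlen) hA
  have hfuture : Measurable[weightsMeasurableSpace X Sᶜ]
      (cascadeLimMass (fun u => X (w ++ u)) (μ.map (shiftMap b)^[w.length])) :=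
    @measurable_cascadeLimMass _ _ _ (_) (fun u hu =>
      measurable_weight (w := ⟨w ++ u, by simp [hu]⟩) (by simp [S, hu])) _
  calc
    ∫⁻ ω in A, cascadeLimMass X μ ω ∂P
      = ∫⁻ ω, A.indicator (fun ω => ENNReal.ofReal (cascadeY X w ω)) ω *
          cascadeLimMass (fun u => X (w ++ u)) (μ.map (shiftMap b)^[w.length]) ω ∂P := by
        rw [← lintegral_indicator hA']
        refine lintegral_congr fun ω => ?_
        rw [← indicator_mul_left]
        simp only [cascadeLimMass_eq_mul_map_shiftMap hμ (hM1.nonneg · _), indicator]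
    _ = (∫⁻ ω in A, ENNReal.ofReal (cascadeY X w ω) ∂P) *
          ∫⁻ ω, cascadeLimMass (fun u => X (w ++ u)) (μ.map (shiftMap b)^[w.length]) ω ∂P := by
        rw [lintegral_mul_eq_lintegral_mul_lintegral_of_independent_measurableSpace
          (weightsMeasurableSpace_le hM1.meas S) (weightsMeasurableSpace_le hM1.meas Sᶜ)
          (hM1.indep_weightsMeasurableSpace disjoint_compl_right) hpast hfuture,
          lintegral_indicator hA']
    _ = _ := by rw [(hM1.subtree w).lintegral_cascadeLimMass_eq hM1]

lemma lintegral_cascadeLimMass_map_shiftMap (hM1 : CascadeM1 P X X₀) {w : List (Fin b)}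
    {μ : Measure (SymbSpace b)} (hμ : ∀ᵐ x ∂μ, x ∈ cylinder w) :
    ∫⁻ ω, cascadeLimMass X (μ.map (shiftMap b)^[w.length]) ω ∂P =
      ∫⁻ ω, cascadeLimMass X μ ω ∂P := by
  simpa [hM1.lintegral_cascadeY] using
    (hM1.setLIntegral_cascadeLimMass_eq_mul hμ MeasurableSet.univ).symm

lemma sum_lintegral_cascadeLimMass_cylinder_cons_le (hM1 : CascadeM1 P X X₀)
    {ν : Measure (SymbSpace b)} (hν : MeasurePreserving (shiftMap b) ν ν) (v : List (Fin b)) :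
    ∑ i, ∫⁻ ω, cascadeLimMass X (ν.restrict (cylinder (i :: v))) ω ∂P ≤
      ∫⁻ ω, cascadeLimMass X (ν.restrict (cylinder v)) ω ∂P := by
  have hmem (i : Fin b) : ∀ᵐ x ∂ν.restrict (cylinder (i :: v)), x ∈ cylinder [i] := by
    filter_upwards [ae_restrict_mem (measurableSet_cylinder (i :: v))] with x hx
    simpa [mem_cylinder_cons] using (mem_cylinder_cons.1 hx).1
  have hmap : ∑ i, (ν.restrict (cylinder (i :: v))).map (shiftMap b) = ν.restrict (cylinder v) := by
    rw [← Measure.map_finset_sum measurable_shiftMap.aemeasurable, sum_restrict_cylinder_cons,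
      ← Measure.restrict_map measurable_shiftMap (measurableSet_cylinder v), hν.map_eq]
  calc
    ∑ i, ∫⁻ ω, cascadeLimMass X (ν.restrict (cylinder (i :: v))) ω ∂P
      = ∑ i, ∫⁻ ω, cascadeLimMass X ((ν.restrict (cylinder (i :: v))).map (shiftMap b)) ω ∂P :=
        Finset.sum_congr rfl fun i _ => (hM1.lintegral_cascadeLimMass_map_shiftMap (hmem i)).symm
    _ = ∫⁻ ω, ∑ i, cascadeLimMass X ((ν.restrict (cylinder (i :: v))).map (shiftMap b)) ω ∂P :=
        (lintegral_finsetSum _ fun i _ =>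
          measurable_cascadeLimMass (fun u _ => hM1.meas u) _).symm
    _ ≤ ∫⁻ ω, cascadeLimMass X (ν.restrict (cylinder v)) ω ∂P :=
        lintegral_mono fun ω => hmap ▸ sum_cascadeLimMass_le _

end CascadeM1

end IndependentWeights

section Dichotomy

variable {b : ℕ} {Ω : Type*} [MeasurableSpace Ω] {P : Measure Ω} {X : List (Fin b) → Ω → ℝ}
  {X₀ : Ω → ℝ} {ν : Measure (SymbSpace b)} {Qν : Ω → Measure (SymbSpace b)}

/-- `Qν` is a version of the random measure `Q · ν`. Weak convergence of `Q_n · ν` is expressed by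
convergence on cylinders, which are clopen and generate the topology. -/
def IsCascadeAction (P : Measure Ω) (X : List (Fin b) → Ω → ℝ) (ν : Measure (SymbSpace b))
    (Qν : Ω → Measure (SymbSpace b)) : Prop :=
  ∀ᵐ ω ∂P, ∀ w, Tendsto (fun n => cascadeMass X n (ν.restrict (cylinder w)) ω) atTop
    (nhds (Qν ω (cylinder w)))

namespace IsCascadeAction

lemma ae_forall_cylinder_eq (hQ : IsCascadeAction P X ν Qν) :
    ∀ᵐ ω ∂P, ∀ w, Qν ω (cylinder w) = cascadeLimMass X (ν.restrict (cylinder w)) ω :=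
  hQ.mono fun _ h w => (h w).liminf_eq.symm

lemma ae_univ_eq (hQ : IsCascadeAction P X ν Qν) :
    ∀ᵐ ω ∂P, Qν ω univ = cascadeLimMass X ν ω := by
  filter_upwards [hQ.ae_forall_cylinder_eq] with ω hω
  simpa using hω []

lemma ae_univ_lt_top [IsFiniteMeasure ν] (hQ : IsCascadeAction P X ν Qν)
    (hM1 : CascadeM1 P X X₀) : ∀ᵐ ω ∂P, Qν ω univ < ∞ := by
  have hfin : ∀ᵐ ω ∂P, cascadeLimMass X ν ω < ∞ :=
    ae_lt_top (measurable_cascadeLimMass (fun u _ => hM1.meas u) ν)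
      (hM1.lintegral_cascadeLimMass_ne_top ν)
  filter_upwards [hQ.ae_univ_eq, hfin] with ω hω hlt
  exact hω ▸ hlt

lemma ae_tendsto_cascadeZ [IsFiniteMeasure ν] (hQ : IsCascadeAction P X ν Qν)
    (hM1 : CascadeM1 P X X₀) :
    ∀ᵐ ω ∂P, Tendsto (fun n => cascadeZ X ν n ω) atTop (nhds (Qν ω univ).toReal) := by
  filter_upwards [hQ, hQ.ae_univ_lt_top hM1] with ω hω hlt
  have hmass : Tendsto (fun n => cascadeMass X n ν ω) atTop (nhds (Qν ω univ)) := by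
    simpa using hω []
  simpa only [Function.comp_def, toReal_cascadeMass (hM1.nonneg · ω)] using
    (ENNReal.tendsto_toReal hlt.ne).comp hmass

lemma ae_cascadeLimMass_eq_sum (hQ : IsCascadeAction P X ν Qν) (n : ℕ) :
    ∀ᵐ ω ∂P, cascadeLimMass X ν ω =
      ∑ u : Fin n → Fin b, cascadeLimMass X (ν.restrict (cylinder (List.ofFn u))) ω := by
  filter_upwards [hQ.ae_forall_cylinder_eq, hQ.ae_univ_eq] with ω hcyl huniv
  rw [← huniv, ← sum_measure_cylinder n]
  exact Finset.sum_congr rfl fun u _ => hcyl _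

lemma bind_cylinder [IsFiniteMeasure ν] (hQ : IsCascadeAction P X ν Qν) (hM1 : CascadeM1 P X X₀)
    (w : List (Fin b)) :
    P.bind Qν (cylinder w) = ∫⁻ ω, cascadeLimMass X (ν.restrict (cylinder w)) ω ∂P := by
  have hcyl (v : List (Fin b)) :
      (fun ω => Qν ω (cylinder v)) =ᵐ[P] cascadeLimMass X (ν.restrict (cylinder v)) :=
    hQ.ae_forall_cylinder_eq.mono fun _ h => h v
  have hQm : AEMeasurable Qν P :=
    aemeasurable_measure_of_forall_cylinder (hQ.ae_univ_lt_top hM1) fun v =>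
      (measurable_cascadeLimMass (fun u _ => hM1.meas u) _).aemeasurable.congr (hcyl v).symm
  rw [Measure.bind_apply (measurableSet_cylinder w) hQm, lintegral_congr_ae (hcyl w)]

lemma bind_le [IsFiniteMeasure ν] (hQ : IsCascadeAction P X ν Qν) (hM1 : CascadeM1 P X X₀) :
    P.bind Qν ≤ ν :=
  le_of_forall_cylinder_le fun w => by
    simpa [hQ.bind_cylinder hM1] using hM1.lintegral_cascadeLimMass_le (ν.restrict (cylinder w))

lemma measurePreserving_bind [IsFiniteMeasure ν] (hQ : IsCascadeAction P X ν Qν)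
    (hM1 : CascadeM1 P X X₀) (hν : MeasurePreserving (shiftMap b) ν ν) :
    MeasurePreserving (shiftMap b) (P.bind Qν) (P.bind Qν) := by
  have : IsFiniteMeasure (P.bind Qν) := isFiniteMeasure_of_le ν (hQ.bind_le hM1)
  have hle : (P.bind Qν).map (shiftMap b) ≤ P.bind Qν := le_of_forall_cylinder_le fun v =>
    calc
      (P.bind Qν).map (shiftMap b) (cylinder v) = ∑ i, P.bind Qν (cylinder (i :: v)) := by
        rw [Measure.map_apply measurable_shiftMap (measurableSet_cylinder v)]
        simpa using (congrArg (· univ) (sum_restrict_cylinder_cons (P.bind Qν) v)).symm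
      _ ≤ P.bind Qν (cylinder v) := by
        simpa only [hQ.bind_cylinder hM1] using
          hM1.sum_lintegral_cascadeLimMass_cylinder_cons_le hν v
  refine ⟨measurable_shiftMap, Measure.eq_of_le_of_measure_univ_eq hle ?_⟩
  rw [Measure.map_apply measurable_shiftMap .univ, preimage_univ]

lemma exists_bind_eq_smul [IsFiniteMeasure ν] (hQ : IsCascadeAction P X ν Qν)
    (hM1 : CascadeM1 P X X₀) (hν : Ergodic (shiftMap b) ν) : ∃ c : ℝ≥0∞, P.bind Qν = c • ν := by
  have : IsFiniteMeasure (P.bind Qν) := isFiniteMeasure_of_le ν (hQ.bind_le hM1)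
  exact hν.eq_smul_of_absolutelyContinuous (hQ.measurePreserving_bind hM1 hν.toMeasurePreserving)
    (Measure.absolutelyContinuous_of_le (hQ.bind_le hM1))

lemma setLIntegral_cascadeLimMass [IsFiniteMeasure ν] (hQ : IsCascadeAction P X ν Qν)
    (hM1 : CascadeM1 P X X₀) {c : ℝ≥0∞} (hc : P.bind Qν = c • ν) {n : ℕ} {A : Set Ω}
    (hA : MeasurableSet[cascadeFiltration hM1.meas n] A) :
    ∫⁻ ω in A, cascadeLimMass X ν ω ∂P = ∫⁻ ω in A, c * cascadeMass X n ν ω ∂P := by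
  have hY (w : List (Fin b)) : Measurable fun ω => ENNReal.ofReal (cascadeY X w ω) :=
    (measurable_cascadeY fun u _ _ => hM1.meas u).ennreal_ofReal
  have hbranch (u : Fin n → Fin b) :
      ∫⁻ ω in A, cascadeLimMass X (ν.restrict (cylinder (List.ofFn u))) ω ∂P =
        (∫⁻ ω in A, ENNReal.ofReal (cascadeY X (List.ofFn u) ω) ∂P) *
          (c * ν (cylinder (List.ofFn u))) := by
    have hmem := ae_restrict_mem (μ := ν) (measurableSet_cylinder (List.ofFn u))
    rw [hM1.setLIntegral_cascadeLimMass_eq_mul hmem (by rwa [List.length_ofFn]),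
      hM1.lintegral_cascadeLimMass_map_shiftMap hmem, ← hQ.bind_cylinder hM1, hc,
      Measure.smul_apply, smul_eq_mul]
  calc
    ∫⁻ ω in A, cascadeLimMass X ν ω ∂P
      = ∫⁻ ω in A, ∑ u : Fin n → Fin b,
          cascadeLimMass X (ν.restrict (cylinder (List.ofFn u))) ω ∂P :=
        lintegral_congr_ae (ae_restrict_of_ae (hQ.ae_cascadeLimMass_eq_sum n))
    _ = ∑ u : Fin n → Fin b, (∫⁻ ω in A, ENNReal.ofReal (cascadeY X (List.ofFn u) ω) ∂P) *
          (c * ν (cylinder (List.ofFn u))) := by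
        rw [lintegral_finsetSum _ fun u _ => measurable_cascadeLimMass (fun u _ => hM1.meas u) _]
        exact Finset.sum_congr rfl fun u _ => hbranch u
    _ = ∫⁻ ω in A, ∑ u : Fin n → Fin b, ENNReal.ofReal (cascadeY X (List.ofFn u) ω) *
          (c * ν (cylinder (List.ofFn u))) ∂P := by
        simp only [lintegral_finsetSum _ fun _ _ => (hY _).mul_const _,
          lintegral_mul_const _ (hY _)]
    _ = ∫⁻ ω in A, c * cascadeMass X n ν ω ∂P := by
        simp only [cascadeMass_eq_sum, Finset.mul_sum, mul_left_comm]

lemma condExp_cascadeLimMass [IsFiniteMeasure ν] (hQ : IsCascadeAction P X ν Qν)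
    (hM1 : CascadeM1 P X X₀) {c : ℝ≥0∞} (hc : P.bind Qν = c • ν) (n : ℕ) :
    P[fun ω => (cascadeLimMass X ν ω).toReal | cascadeFiltration hM1.meas n] =ᵐ[P]
      fun ω => c.toReal * cascadeZ X ν n ω := by
  have : IsProbabilityMeasure P := hM1.indep.isProbabilityMeasure
  have hmass : Measurable[cascadeFiltration hM1.meas n] (cascadeMass X n ν) :=
    @measurable_cascadeMass _ _ _ (_) _ (fun u hu hlen => measurable_weight (w := ⟨u, hu⟩) hlen) ν
  have hcondL : (fun ω => c * cascadeMass X n ν ω) =ᵐ[P]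
      P⁻[cascadeLimMass X ν | cascadeFiltration hM1.meas n] :=
    ae_eq_condLExp ((cascadeFiltration hM1.meas).le n) P _ (hmass.const_mul c) fun A hA =>
      (hQ.setLIntegral_cascadeLimMass hM1 hc hA).symm
  have htoReal := toReal_condLExp (cascadeFiltration hM1.meas n)
    (measurable_cascadeLimMass (fun u _ => hM1.meas u) ν).aemeasurable
    (hM1.lintegral_cascadeLimMass_ne_top ν)
  filter_upwards [hcondL, htoReal] with ω hω hωr
  rw [← hωr, ← hω, ENNReal.toReal_mul, toReal_cascadeMass (hM1.nonneg · ω)]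

end IsCascadeAction

end Dichotomy

/-- **Proposition (dichotomy for ergodic measures).** Let `Q` be a Mandelbrot
multiplicative cascade (assumption (M1)) acting on a Borel probability measure `ν` on `Σ`
which is ergodic for the left shift, and let `Q·ν` denote the almost-sure weak limit of the
cascade measures (characterised by convergence on cylinders). Then `ν` is either
`Q`-regular (the martingale `(Z_n)` is uniformly integrable) or `Q`-singular
(`Q·ν = 0` almost surely). -/
theorem ergodic_measure_regular_or_singular
    {b : ℕ} (hb : 2 ≤ b)
    {Ω : Type*} [MeasurableSpace Ω] (P : Measure Ω) [IsProbabilityMeasure P]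
    (X : List (Fin b) → Ω → ℝ) (X₀ : Ω → ℝ)
    (hM1 : CascadeM1 P X X₀)
    (ν : Measure (SymbSpace b)) [IsProbabilityMeasure ν]
    (hν : Ergodic (shiftMap b) ν)
    (Qν : Ω → Measure (SymbSpace b))
    (hQν : ∀ᵐ ω ∂P, ∀ w : List (Fin b),
      Tendsto (fun n => ∫⁻ x in cylinder w, ENNReal.ofReal (cascadeY X (wordPrefix x n) ω) ∂ν)
        atTop (nhds (Qν ω (cylinder w)))) :
    UniformIntegrable (fun n ω => cascadeZ X ν n ω) 1 P ∨ (∀ᵐ ω ∂P, Qν ω = 0) := by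
  have hQ : IsCascadeAction P X ν Qν := hQν
  obtain ⟨c, hc⟩ := hQ.exists_bind_eq_smul hM1 hν
  have hmeas : StronglyMeasurable[⨆ n, cascadeFiltration hM1.meas n]
      fun ω => (cascadeLimMass X ν ω).toReal :=
    (measurable_cascadeLimMass_iSup_cascadeFiltration hM1.meas ν).ennreal_toReal.stronglyMeasurable
  have hlim : ∀ᵐ ω ∂P, Tendsto (fun n => cascadeZ X ν n ω) atTop
      (nhds (cascadeLimMass X ν ω).toReal) := by
    filter_upwards [hQ.ae_tendsto_cascadeZ hM1, hQ.ae_univ_eq] with ω htend huniv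
    rwa [← huniv]
  refine (uniformIntegrable_or_ae_eq_zero_of_condExp_ae_eq_const_mul
    (hM1.integrable_toReal_cascadeLimMass ν) hmeas hlim
    (hQ.condExp_cascadeLimMass hM1 hc)).imp_right fun hzero => ?_
  filter_upwards [hzero, hQ.ae_univ_eq, hQ.ae_univ_lt_top hM1] with ω h0 huniv hlt
  rw [← huniv] at h0
  exact Measure.measure_univ_eq_zero.1 (((ENNReal.toReal_eq_zero_iff _).1 h0).resolve_right hlt.ne)

end
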